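/- Let ρ and σ be quantum states (positive semidefinite with trace 1) on a finite-dimensional Hilbert space such that μσ ≤ ρ ≤ λσ for constants 0 < μ ≤ λ < ∞. Then the quantum relative entropy satisfies D(ρ‖σ) = ∫_μ^λ (1/s) tr⁺[σ s − ρ] ds + ln λ + 1 − λ. -/

import Mathlib

open Matrix
open scoped ComplexOrder

/-- Trace of the positive part, via the variational formula. -/
noncomputable def trPos {n : Type*} [Fintype n] [DecidableEq n] (M : Matrix n n ℂ) : ℝ :=
  sSup {x : ℝ | ∃ P : Matrix n n ℂ, P.PosSemidef ∧ ((1 : Matrix n n ℂ) - P).PosSemidef ∧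
    x = (Matrix.trace (P * M)).re}

/-- Matrix logarithm via the spectral decomposition (functional calculus with `Real.log`,
taken on the support). -/
noncomputable def matLog {n : Type*} [Fintype n] [DecidableEq n] (A : Matrix n n ℂ) :
    Matrix n n ℂ :=
  if hA : A.IsHermitian then
    (hA.eigenvectorUnitary : Matrix n n ℂ) *
      Matrix.diagonal (fun i => (Real.log (hA.eigenvalues i) : ℂ)) *
      (star hA.eigenvectorUnitary : Matrix n n ℂ)
  else 0

/-!
Write `Φ(r) = ∫₀^λ tr⁺[s(σ + r) - ρ] ds / s + tr[ρ ln(σ + r)] - rλ dim`. The integrand vanishes on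
`[0, μ]`, so the theorem computes `Φ(0)`, and the idea is that `Φ` is constant on `[0, ∞)`.

For `r > 0` write `σ + r = C C*` and `ρ = C diag(t) C*` with `0 ≤ t ≤ λ`. The derivative of
`x ↦ tr⁺[s(σ + x) - ρ] / s` at `r` is the number of positive eigenvalues of
`s(σ + r) - ρ = C diag(s - t) C*`, which by Sylvester's law of inertia is the number of `i` with
`tᵢ < s`. Integrating over `[0, λ]` gives `∑ᵢ (λ - tᵢ) = λ dim - tr[(σ + r)⁻¹ ρ]`, and the last
term is the derivative of `tr[ρ ln(σ + r)]`, so `Φ' = 0`.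

As `r → ∞` the positive part of `s(σ + r) - ρ` becomes the whole matrix, so that `σ` contributes
`λ tr σ` to the integral, while `tr[ρ ln(σ + r)]` approaches `tr ρ ln r`. What remains is an
integral along the commuting pencil `s r - ρ`, which is evaluated eigenvalue by eigenvalue.
-/

section Spectral

variable {n : Type*} [Fintype n] [DecidableEq n]

/-- The Hermitian matrix `U diag(m) U*` with eigenbasis the columns of `U` and eigenvalues `m`:
functions of a Hermitian matrix are obtained by changing `m` while keeping `U`. -/
noncomputable def conjDiag (U : unitaryGroup n ℂ) (m : n → ℝ) : Matrix n n ℂ :=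
  (U : Matrix n n ℂ) * diagonal (fun i => (m i : ℂ)) * star (U : Matrix n n ℂ)

/-- The diagonal entries of `X` in the orthonormal basis formed by the columns of `U`. Only the
real parts are kept, as `X` is Hermitian in the applications. -/
noncomputable def diagIn (U : unitaryGroup n ℂ) (X : Matrix n n ℂ) (i : n) : ℝ :=
  ((star (U : Matrix n n ℂ) * X * (U : Matrix n n ℂ)) i i).re

variable (U : unitaryGroup n ℂ)

theorem conjDiag_eigenvalues {A : Matrix n n ℂ} (hA : A.IsHermitian) :
    conjDiag hA.eigenvectorUnitary hA.eigenvalues = A :=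
  hA.spectral_theorem.symm

theorem conjDiag_log_eigenvalues {A : Matrix n n ℂ} (hA : A.IsHermitian) :
    conjDiag hA.eigenvectorUnitary (fun i => Real.log (hA.eigenvalues i)) = matLog A := by
  rw [matLog, dif_pos hA]; rfl

theorem conjDiag_one : conjDiag U 1 = 1 := by
  simp [conjDiag]

theorem conjDiag_add (a b : n → ℝ) : conjDiag U (a + b) = conjDiag U a + conjDiag U b := by
  simp only [conjDiag, Pi.add_apply, Complex.ofReal_add, ← diagonal_add, mul_add, add_mul]

theorem conjDiag_smul (c : ℝ) (a : n → ℝ) : conjDiag U (c • a) = c • conjDiag U a := by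
  have hdiag : diagonal (fun i => (((c • a) i : ℝ) : ℂ)) = c • diagonal fun i => (a i : ℂ) := by
    ext i j
    by_cases hij : i = j <;> simp [hij]
  rw [conjDiag, hdiag, mul_smul_comm, smul_mul_assoc, conjDiag]

theorem conjDiag_mul (a b : n → ℝ) : conjDiag U (a * b) = conjDiag U a * conjDiag U b := by
  have hU : star (U : Matrix n n ℂ) * U = 1 := Unitary.coe_star_mul_self U
  simp only [conjDiag, Pi.mul_apply, Complex.ofReal_mul, ← diagonal_mul_diagonal, mul_assoc]
  rw [← mul_assoc (star (U : Matrix n n ℂ)), hU, one_mul]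

theorem posSemidef_conjDiag_iff {a : n → ℝ} : (conjDiag U a).PosSemidef ↔ 0 ≤ a := by
  rw [conjDiag, (Unitary.isUnit_coe (U := U)).posSemidef_star_right_conjugate_iff,
    posSemidef_diagonal_iff]
  simp [Pi.le_def]

theorem conjDiag_add_smul_one (m : n → ℝ) (x : ℝ) :
    conjDiag U m + x • 1 = conjDiag U fun i => m i + x := by
  rw [← conjDiag_one U, ← conjDiag_smul, ← conjDiag_add]
  congr 1
  ext i
  simp

theorem smul_one_sub_conjDiag (m : n → ℝ) (x : ℝ) :
    x • 1 - conjDiag U m = conjDiag U fun i => x - m i := by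
  have h : x • 1 - conjDiag U m = conjDiag U ((-1 : ℝ) • m) + x • 1 := by
    rw [conjDiag_smul]
    module
  rw [h, conjDiag_add_smul_one]
  congr 1
  ext i
  simp [sub_eq_neg_add]

theorem posSemidef_smul_one_sub_conjDiag_iff {m : n → ℝ} {x : ℝ} :
    (x • 1 - conjDiag U m).PosSemidef ↔ ∀ i, m i ≤ x := by
  simp [smul_one_sub_conjDiag, posSemidef_conjDiag_iff, Pi.le_def]

theorem re_trace_mul_conjDiag (X : Matrix n n ℂ) (m : n → ℝ) :
    (X * conjDiag U m).trace.re = ∑ i, diagIn U X i * m i := by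
  rw [conjDiag, ← mul_assoc, trace_mul_comm, ← mul_assoc, ← mul_assoc, trace, Complex.re_sum]
  simp [mul_diagonal, diagIn]

theorem sum_diagIn (X : Matrix n n ℂ) : ∑ i, diagIn U X i = X.trace.re := by
  simpa [conjDiag_one] using (re_trace_mul_conjDiag U X 1).symm

theorem diagIn_sub (X Y : Matrix n n ℂ) (i : n) :
    diagIn U (X - Y) i = diagIn U X i - diagIn U Y i := by
  simp [diagIn, mul_sub, sub_mul]

theorem diagIn_smul (c : ℝ) (X : Matrix n n ℂ) (i : n) :
    diagIn U (c • X) i = c * diagIn U X i := by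
  simp [diagIn]

theorem diagIn_one (i : n) : diagIn U 1 i = 1 := by
  simp [diagIn]

theorem star_mul_conjDiag_mul (m : n → ℝ) :
    star (U : Matrix n n ℂ) * conjDiag U m * (U : Matrix n n ℂ) =
      diagonal fun i => (m i : ℂ) := by
  have hU : star (U : Matrix n n ℂ) * U = 1 := Unitary.coe_star_mul_self U
  rw [conjDiag, mul_assoc, mul_assoc _ _ (U : Matrix n n ℂ), hU, mul_one, ← mul_assoc, hU, one_mul]

theorem diagIn_conjDiag (m : n → ℝ) (i : n) : diagIn U (conjDiag U m) i = m i := by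
  simp [diagIn, star_mul_conjDiag_mul]

theorem diagIn_eigenvectorUnitary {A : Matrix n n ℂ} (hA : A.IsHermitian) (i : n) :
    diagIn hA.eigenvectorUnitary A i = hA.eigenvalues i := by
  simpa only [conjDiag_eigenvalues] using diagIn_conjDiag hA.eigenvectorUnitary hA.eigenvalues i

theorem diagIn_nonneg {X : Matrix n n ℂ} (hX : X.PosSemidef) (i : n) : 0 ≤ diagIn U X i :=
  (Complex.le_def.mp (hX.conjTranspose_mul_mul_same (U : Matrix n n ℂ)).diag_nonneg).1

theorem inv_conjDiag {m : n → ℝ} (hm : ∀ i, m i ≠ 0) :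
    (conjDiag U m)⁻¹ = conjDiag U fun i => (m i)⁻¹ := by
  refine inv_eq_left_inv ?_
  rw [← conjDiag_mul, ← conjDiag_one U]
  congr 1
  ext i
  simp [hm i]

end Spectral

theorem re_trace_mul_nonneg {n : Type*} [Fintype n] {A B : Matrix n n ℂ}
    (hA : A.PosSemidef) (hB : B.PosSemidef) : 0 ≤ (A * B).trace.re := by
  classical
  rw [← conjDiag_eigenvalues hB.isHermitian, re_trace_mul_conjDiag]
  exact Finset.sum_nonneg fun i _ => mul_nonneg (diagIn_nonneg _ hA i) (hB.eigenvalues_nonneg i)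

theorem eventually_posSemidef_smul_one_sub {n : Type*} [Finite n] [DecidableEq n]
    {A : Matrix n n ℂ} (hA : A.IsHermitian) : ∀ᶠ x : ℝ in Filter.atTop, (x • 1 - A).PosSemidef := by
  cases nonempty_fintype n
  obtain ⟨U, m, rfl⟩ : ∃ U m, A = conjDiag U m := ⟨_, _, (conjDiag_eigenvalues hA).symm⟩
  simp only [posSemidef_smul_one_sub_conjDiag_iff, Filter.eventually_all]
  exact fun i => Filter.eventually_ge_atTop (m i)

section TrPos

variable {n : Type*} [Fintype n] [DecidableEq n]

theorem re_trace_mul_conjDiag_le (U : unitaryGroup n ℂ) (m : n → ℝ) {P : Matrix n n ℂ}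
    (hP : P.PosSemidef) (hP' : (1 - P).PosSemidef) :
    (P * conjDiag U m).trace.re ≤ ∑ i, max (m i) 0 := by
  rw [re_trace_mul_conjDiag]
  refine Finset.sum_le_sum fun i _ => ?_
  have h0 : 0 ≤ diagIn U P i := diagIn_nonneg U hP i
  have h1 : diagIn U P i ≤ 1 := by
    simpa [diagIn_sub, diagIn_one] using diagIn_nonneg U hP' i
  calc diagIn U P i * m i ≤ diagIn U P i * max (m i) 0 := by gcongr; exact le_max_left _ _
    _ ≤ max (m i) 0 := mul_le_of_le_one_left (le_max_right _ _) h1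

theorem isGreatest_re_trace_mul_conjDiag (U : unitaryGroup n ℂ) (m : n → ℝ) :
    IsGreatest {x : ℝ | ∃ P : Matrix n n ℂ, P.PosSemidef ∧ (1 - P).PosSemidef ∧
      x = (P * conjDiag U m).trace.re} (∑ i, max (m i) 0) := by
  constructor
  · -- the projection onto the eigenvectors with positive eigenvalue
    refine ⟨conjDiag U fun i => if 0 < m i then 1 else 0, ?_, ?_, ?_⟩
    · exact (posSemidef_conjDiag_iff U).mpr fun i => by dsimp; split_ifs <;> norm_num
    · rw [← one_smul ℝ (1 : Matrix n n ℂ), posSemidef_smul_one_sub_conjDiag_iff]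
      exact fun i => by split_ifs <;> norm_num
    · rw [re_trace_mul_conjDiag]
      refine Finset.sum_congr rfl fun i _ => ?_
      rw [diagIn_conjDiag]
      split_ifs with h
      · rw [one_mul, max_eq_left h.le]
      · rw [zero_mul, max_eq_right (not_lt.mp h)]
  · rintro _ ⟨P, hP, hP', rfl⟩
    exact re_trace_mul_conjDiag_le U m hP hP'

theorem trPos_conjDiag (U : unitaryGroup n ℂ) (m : n → ℝ) :
    trPos (conjDiag U m) = ∑ i, max (m i) 0 :=
  (isGreatest_re_trace_mul_conjDiag U m).csSup_eq

theorem isGreatest_trPos {M : Matrix n n ℂ} (hM : M.IsHermitian) :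
    IsGreatest {x : ℝ | ∃ P : Matrix n n ℂ, P.PosSemidef ∧ (1 - P).PosSemidef ∧
      x = (P * M).trace.re} (trPos M) := by
  have h := isGreatest_re_trace_mul_conjDiag hM.eigenvectorUnitary hM.eigenvalues
  rwa [← trPos_conjDiag, conjDiag_eigenvalues] at h

theorem trPos_nonneg {M : Matrix n n ℂ} (hM : M.IsHermitian) : 0 ≤ trPos M :=
  (isGreatest_trPos hM).2 ⟨0, .zero, by simpa using PosSemidef.one, by simp⟩

theorem trPos_mono {A B : Matrix n n ℂ} (hA : A.IsHermitian) (hB : B.IsHermitian)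
    (hAB : (B - A).PosSemidef) : trPos A ≤ trPos B := by
  obtain ⟨P, hP, hP', hPA⟩ := (isGreatest_trPos hA).1
  have hdiff : 0 ≤ (P * (B - A)).trace.re := re_trace_mul_nonneg hP hAB
  calc trPos A = (P * A).trace.re := hPA
    _ ≤ (P * B).trace.re := by simpa [mul_sub] using hdiff
    _ ≤ trPos B := (isGreatest_trPos hB).2 ⟨P, hP, hP', rfl⟩

theorem trPos_add_le {A B : Matrix n n ℂ} (hA : A.IsHermitian) (hB : B.IsHermitian) :
    trPos (A + B) ≤ trPos A + trPos B := by
  obtain ⟨P, hP, hP', hPAB⟩ := (isGreatest_trPos (hA.add hB)).1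
  rw [hPAB, mul_add, trace_add, Complex.add_re]
  exact add_le_add ((isGreatest_trPos hA).2 ⟨P, hP, hP', rfl⟩)
    ((isGreatest_trPos hB).2 ⟨P, hP, hP', rfl⟩)

theorem trPos_eq_re_trace {M : Matrix n n ℂ} (hM : M.PosSemidef) : trPos M = M.trace.re := by
  rw [← sum_diagIn hM.1.eigenvectorUnitary M, ← congrArg trPos (conjDiag_eigenvalues hM.1),
    trPos_conjDiag]
  simp only [diagIn_eigenvectorUnitary, max_eq_left (hM.eigenvalues_nonneg _)]

theorem trPos_eq_zero {M : Matrix n n ℂ} (hM : (-M).PosSemidef) : trPos M = 0 := by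
  have hM' : M.IsHermitian := by simpa using hM.isHermitian.neg
  refine le_antisymm ?_ (trPos_nonneg hM')
  calc trPos M ≤ trPos 0 := trPos_mono hM' isHermitian_zero (by simpa using hM)
    _ = 0 := by simp [trPos_eq_re_trace PosSemidef.zero]

theorem trPos_smul_one (c : ℝ) :
    trPos (c • (1 : Matrix n n ℂ)) = Fintype.card n * max c 0 := by
  rw [← conjDiag_one 1, ← conjDiag_smul, trPos_conjDiag]
  simp

theorem abs_trPos_add_smul_one_sub_le {M : Matrix n n ℂ} (hM : M.IsHermitian) (x y : ℝ) :
    |trPos (M + x • 1) - trPos (M + y • 1)| ≤ Fintype.card n * |x - y| := by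
  have herm (c : ℝ) : (c • (1 : Matrix n n ℂ)).IsHermitian := isHermitian_one.smul rfl
  have key (x y : ℝ) :
      trPos (M + x • 1) - trPos (M + y • 1) ≤ Fintype.card n * |x - y| := by
    have hsplit : M + x • 1 = (M + y • 1) + (x - y) • (1 : Matrix n n ℂ) := by module
    calc trPos (M + x • 1) - trPos (M + y • 1)
        ≤ trPos ((x - y) • (1 : Matrix n n ℂ)) := by
          rw [hsplit, sub_le_iff_le_add']
          exact trPos_add_le (hM.add (herm y)) (herm _)
      _ ≤ Fintype.card n * |x - y| := by
          rw [trPos_smul_one]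
          gcongr
          exact max_le (le_abs_self _) (abs_nonneg _)
  exact abs_sub_le_iff.mpr ⟨key x y, abs_sub_comm x y ▸ key y x⟩

theorem hasDerivAt_trPos_conjDiag_add_smul_one (U : unitaryGroup n ℂ) {m : n → ℝ} {x : ℝ}
    (hm : ∀ i, m i + x ≠ 0) :
    HasDerivAt (fun y : ℝ => trPos (conjDiag U m + y • 1)) ({i | 0 < m i + x}.ncard : ℝ) x := by
  have hsum (y : ℝ) : trPos (conjDiag U m + y • 1) = ∑ i, max (m i + y) 0 := by
    rw [conjDiag_add_smul_one, trPos_conjDiag]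
  have hterm (i : n) :
      HasDerivAt (fun y => max (m i + y) 0) (if 0 < m i + x then 1 else 0) x := by
    have hcont : ContinuousAt (fun y => m i + y) x := by fun_prop
    rcases (hm i).lt_or_gt with hneg | hpos
    · rw [if_neg hneg.not_gt]
      refine (hasDerivAt_const x (0 : ℝ)).congr_of_eventuallyEq ?_
      filter_upwards [hcont.eventually_lt_const hneg] with y hy
      exact max_eq_right hy.le
    · rw [if_pos hpos]
      refine ((hasDerivAt_id x).const_add (m i)).congr_of_eventuallyEq ?_
      filter_upwards [hcont.eventually_const_lt hpos] with y hy
      exact max_eq_left hy.le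
  simp only [hsum, Set.ncard_eq_toFinset_card', Set.toFinset_ofPred, Finset.natCast_card_filter]
  exact HasDerivAt.fun_sum fun i _ => hterm i

end TrPos

section Congruence

variable {𝕜 n : Type*} [RCLike 𝕜] [Fintype n]

theorem sum_mul_norm_sq_pos {d : n → ℝ} {v : n → 𝕜} (hv : v ∈ Pi.spanSubset 𝕜 {i | 0 < d i})
    (hv0 : v ≠ 0) : 0 < ∑ i, d i * ‖v i‖ ^ 2 := by
  rw [Pi.mem_spanSubset_iff] at hv
  obtain ⟨j, hj⟩ := Function.ne_iff.mp hv0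
  have hdj : 0 < d j := by_contra fun h => hj (hv j h)
  refine Finset.sum_pos' (fun i _ => ?_) ⟨j, Finset.mem_univ j, ?_⟩
  · by_cases hi : 0 < d i
    · positivity
    · simp [hv i hi]
  · have : 0 < ‖v j‖ := norm_pos_iff.mpr hj
    positivity

theorem sum_mul_norm_sq_nonpos {d : n → ℝ} {v : n → 𝕜}
    (hv : v ∈ Pi.spanSubset 𝕜 {i | d i ≤ 0}) : ∑ i, d i * ‖v i‖ ^ 2 ≤ 0 := by
  rw [Pi.mem_spanSubset_iff] at hv
  refine Finset.sum_nonpos fun i _ => ?_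
  by_cases hi : d i ≤ 0
  · exact mul_nonpos_of_nonpos_of_nonneg hi (by positivity)
  · simp [hv i hi]

variable [DecidableEq n]

open scoped MatrixOrder in
theorem exists_eq_mul_conjTranspose_of_posDef {S : Matrix n n 𝕜} (hS : S.PosDef) :
    ∃ B : Matrix n n 𝕜, IsUnit B ∧ S = B * Bᴴ :=
  CStarAlgebra.isStrictlyPositive_iff_eq_mul_star_self.mp hS.isStrictlyPositive

theorem exists_unitary_mul_diagonal_mul {A : Matrix n n 𝕜} (hA : A.IsHermitian) :
    ∃ (U : unitaryGroup n 𝕜) (t : n → ℝ),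
      A = (U : Matrix n n 𝕜) * diagonal (fun i => (t i : 𝕜)) * (U : Matrix n n 𝕜)ᴴ :=
  ⟨hA.eigenvectorUnitary, hA.eigenvalues, hA.spectral_theorem⟩

theorem exists_simultaneous_congruence {S A : Matrix n n 𝕜} (hS : S.PosDef)
    (hA : A.IsHermitian) :
    ∃ (C : Matrix n n 𝕜) (t : n → ℝ), IsUnit C ∧ S = C * Cᴴ ∧
      A = C * diagonal (fun i => (t i : 𝕜)) * Cᴴ := by
  obtain ⟨B, hB, rfl⟩ := exists_eq_mul_conjTranspose_of_posDef hS
  lift B to (Matrix n n 𝕜)ˣ using hB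
  set V : Matrix n n 𝕜 := ↑B⁻¹
  have hBV : (B : Matrix n n 𝕜) * V = 1 := B.mul_inv
  have hVB : Vᴴ * (B : Matrix n n 𝕜)ᴴ = 1 := by
    rw [← conjTranspose_mul, hBV, conjTranspose_one]
  obtain ⟨U, t, hUt⟩ := exists_unitary_mul_diagonal_mul (isHermitian_mul_mul_conjTranspose V hA)
  have hU : (U : Matrix n n 𝕜) * (U : Matrix n n 𝕜)ᴴ = 1 := Unitary.coe_mul_star_self U
  refine ⟨B * U, t, B.isUnit.mul Unitary.isUnit_coe, ?_, ?_⟩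
  · rw [conjTranspose_mul, mul_assoc, ← mul_assoc _ _ (B : Matrix n n 𝕜)ᴴ, hU, one_mul]
  · calc A = (B * V) * A * (Vᴴ * (B : Matrix n n 𝕜)ᴴ) := by rw [hBV, hVB, one_mul, mul_one]
      _ = B * (V * A * Vᴴ) * (B : Matrix n n 𝕜)ᴴ := by simp only [mul_assoc]
      _ = _ := by rw [hUt, conjTranspose_mul]; simp only [mul_assoc]

theorem smul_mul_conjTranspose_sub (C : Matrix n n 𝕜) (t : n → ℝ) (s : ℝ) :
    s • (C * Cᴴ) - C * diagonal (fun i => (t i : 𝕜)) * Cᴴ =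
      C * diagonal (fun i => ((s - t i : ℝ) : 𝕜)) * Cᴴ := by
  have hsub : diagonal (fun i => ((s - t i : ℝ) : 𝕜)) =
      s • (1 : Matrix n n 𝕜) - diagonal fun i => (t i : 𝕜) := by
    ext i j
    by_cases hij : i = j <;> simp [hij, RCLike.real_smul_eq_coe_mul]
  rw [hsub]
  simp [mul_sub, sub_mul]

theorem trace_inv_mul_congruence {C : Matrix n n 𝕜} (hC : IsUnit C) (D : Matrix n n 𝕜) :
    ((C * Cᴴ)⁻¹ * (C * D * Cᴴ)).trace = D.trace := by
  have hdet : IsUnit C.det := (isUnit_iff_isUnit_det C).mp hC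
  have hdet' : IsUnit Cᴴ.det := (isUnit_iff_isUnit_det _).mp hC.star
  rw [Matrix.mul_inv_rev, mul_assoc, mul_assoc C, nonsing_inv_mul_cancel_left _ _ hdet,
    trace_mul_comm, mul_assoc, mul_nonsing_inv _ hdet', mul_one]

theorem star_dotProduct_diagonal_mulVec (d : n → ℝ) (v : n → 𝕜) :
    star v ⬝ᵥ diagonal (fun i => (d i : 𝕜)) *ᵥ v = ((∑ i, d i * ‖v i‖ ^ 2 : ℝ) : 𝕜) := by
  simp only [dotProduct, mulVec_diagonal, Pi.star_apply, RCLike.star_def, RCLike.ofReal_sum,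
    RCLike.ofReal_mul, RCLike.ofReal_pow, ← RCLike.conj_mul]
  exact Finset.sum_congr rfl fun i _ => by ring

theorem ncard_pos_le_of_congruence {B : Matrix n n 𝕜} (hB : IsUnit B) {d e : n → ℝ}
    (h : diagonal (fun i => (d i : 𝕜)) = B * diagonal (fun i => (e i : 𝕜)) * Bᴴ) :
    {i | 0 < d i}.ncard ≤ {i | 0 < e i}.ncard := by
  let E : (n → 𝕜) ≃ₗ[𝕜] (n → 𝕜) := Bᴴ.toLinearEquiv' hB.star.invertible
  let W := (Pi.spanSubset 𝕜 {i | e i ≤ 0}).comap E.toLinearMap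
  have hdisj : Disjoint (Pi.spanSubset 𝕜 {i | 0 < d i}) W := by
    rw [Submodule.disjoint_def]
    intro v hv hvW
    by_contra hv0
    have hvW' : Bᴴ *ᵥ v ∈ Pi.spanSubset 𝕜 {i | e i ≤ 0} := hvW
    have heq : ∑ i, d i * ‖v i‖ ^ 2 = ∑ i, e i * ‖(Bᴴ *ᵥ v) i‖ ^ 2 := by
      rw [← RCLike.ofReal_inj (K := 𝕜), ← star_dotProduct_diagonal_mulVec,
        ← star_dotProduct_diagonal_mulVec, h, star_mulVec, conjTranspose_conjTranspose]
      simp [dotProduct_mulVec, vecMul_vecMul, mul_assoc]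
    exact absurd (sum_mul_norm_sq_pos hv hv0) (heq ▸ (sum_mul_norm_sq_nonpos hvW').not_gt)
  have hW : Module.finrank 𝕜 W = {i | e i ≤ 0}.ncard := by
    rw [← Pi.dim_spanSubset (R := 𝕜), ← E.finrank_map_eq W,
      Submodule.map_comap_eq_of_surjective E.surjective]
  have hdim := Submodule.finrank_add_finrank_le_of_disjoint hdisj
  rw [hW, Pi.dim_spanSubset, Module.finrank_fintype_fun_eq_card, ← Nat.card_eq_fintype_card,
    ← Set.ncard_add_ncard_compl {i | 0 < e i}, Set.compl_ofPred] at hdim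
  simpa using hdim

theorem ncard_pos_eq_of_congruence {B : Matrix n n 𝕜} (hB : IsUnit B) {d e : n → ℝ}
    (h : diagonal (fun i => (d i : 𝕜)) = B * diagonal (fun i => (e i : 𝕜)) * Bᴴ) :
    {i | 0 < d i}.ncard = {i | 0 < e i}.ncard := by
  lift B to (Matrix n n 𝕜)ˣ using hB
  refine le_antisymm (ncard_pos_le_of_congruence B.isUnit h)
    (ncard_pos_le_of_congruence (B⁻¹).isUnit ?_)
  have hinv : (↑B⁻¹ : Matrix n n 𝕜) * B = 1 := B.inv_mul
  have hinv' : (B : Matrix n n 𝕜)ᴴ * (↑B⁻¹ : Matrix n n 𝕜)ᴴ = 1 := by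
    rw [← conjTranspose_mul, hinv, conjTranspose_one]
  rw [h, mul_assoc, mul_assoc, hinv', mul_one, ← mul_assoc, hinv, one_mul]

end Congruence

section Derivative

variable {n : Type*} [Fintype n] [DecidableEq n]

theorem hasDerivAt_trPos_add_smul_one {M C : Matrix n n ℂ} (hM : M.IsHermitian) (hC : IsUnit C)
    {e : n → ℝ} (he : ∀ i, e i ≠ 0) {x : ℝ}
    (h : M + x • 1 = C * diagonal (fun i => (e i : ℂ)) * Cᴴ) :
    HasDerivAt (fun y : ℝ => trPos (M + y • 1)) ({i | 0 < e i}.ncard : ℝ) x := by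
  obtain ⟨U, m, rfl⟩ : ∃ U m, M = conjDiag U m :=
    ⟨_, _, (conjDiag_eigenvalues hM).symm⟩
  have hB : IsUnit (star (U : Matrix n n ℂ) * C) := Unitary.isUnit_coe.star.mul hC
  have hconj : diagonal (fun i => ((m i + x : ℝ) : ℂ)) =
      (star (U : Matrix n n ℂ) * C) * diagonal (fun i => (e i : ℂ)) *
        (star (U : Matrix n n ℂ) * C)ᴴ := by
    rw [← star_mul_conjDiag_mul U, ← conjDiag_add_smul_one, h]
    simp [star_eq_conjTranspose, mul_assoc]
  have hne (i : n) : m i + x ≠ 0 := by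
    have hdiag : IsUnit (diagonal fun i => (e i : ℂ)) :=
      isUnit_diagonal.mpr (Pi.isUnit_iff.mpr fun i => by simpa using he i)
    have hunit : IsUnit (diagonal fun i => ((m i + x : ℝ) : ℂ)) :=
      hconj ▸ (hB.mul hdiag).mul hB.star
    exact_mod_cast (Pi.isUnit_iff.mp (isUnit_diagonal.mp hunit) i).ne_zero
  rw [← ncard_pos_eq_of_congruence hB hconj]
  exact hasDerivAt_trPos_conjDiag_add_smul_one U hne

end Derivative

section Scalar

open intervalIntegral MeasureTheory

theorem intervalIntegrable_div_self {f : ℝ → ℝ} (hf : Measurable f) {c lam : ℝ} (hlam : 0 ≤ lam)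
    (hf0 : ∀ s, 0 < s → 0 ≤ f s) (hfc : ∀ s, 0 < s → f s ≤ s * c) :
    IntervalIntegrable (fun s => f s / s) volume 0 lam := by
  rw [intervalIntegrable_iff_integrableOn_Ioc_of_le hlam]
  refine Measure.integrableOn_of_bounded (M := c) measure_Ioc_lt_top.ne
    (hf.div measurable_id).aestronglyMeasurable ?_
  filter_upwards [ae_restrict_mem measurableSet_Ioc] with s hs
  rw [Real.norm_of_nonneg (div_nonneg (hf0 s hs.1) hs.1.le), div_le_iff₀' hs.1]
  exact hfc s hs.1

theorem integral_ite_lt {t lam : ℝ} (ht : 0 ≤ t) (htlam : t ≤ lam) :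
    ∫ s in (0 : ℝ)..lam, (if t < s then 1 else 0 : ℝ) = lam - t := by
  have h (s : ℝ) : (if t < s then 1 else 0 : ℝ) = (Set.Ioi t).indicator 1 s := by
    simp [Set.indicator_apply]
  simp_rw [h]
  rw [integral_of_le (ht.trans htlam), setIntegral_indicator measurableSet_Ioi, Set.Ioc_inter_Ioi,
    max_eq_right ht]
  simp [htlam]

theorem integral_ncard_lt {ι : Type*} [Fintype ι] {t : ι → ℝ} {lam : ℝ} (ht : ∀ i, 0 ≤ t i)
    (htlam : ∀ i, t i ≤ lam) :
    ∫ s in (0 : ℝ)..lam, ({i | t i < s}.ncard : ℝ) = Fintype.card ι * lam - ∑ i, t i := by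
  have hncard (s : ℝ) : ({i | t i < s}.ncard : ℝ) = ∑ i, if t i < s then 1 else 0 := by
    classical
    rw [Set.ncard_eq_toFinset_card', Set.toFinset_ofPred, Finset.natCast_card_filter]
  have hint (i : ι) : IntervalIntegrable (fun s => if t i < s then 1 else 0 : ℝ → ℝ) volume 0 lam :=
    Monotone.intervalIntegrable fun a b hab => by grind
  simp_rw [hncard]
  rw [integral_finsetSum fun i _ => hint i]
  simp [integral_ite_lt (ht _) (htlam _)]

theorem intervalIntegrable_max_mul_sub_div {p r lam : ℝ} (hp : 0 ≤ p) (hr : 0 ≤ r)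
    (hlam : 0 ≤ lam) :
    IntervalIntegrable (fun s => max (s * r - p) 0 / s) volume 0 lam := by
  refine intervalIntegrable_div_self (c := r) (by fun_prop) hlam (fun s _ => le_max_right _ _) ?_
  exact fun s hs => max_le (by linarith) (by positivity)

theorem integral_max_mul_sub_div_of_pos {p r lam : ℝ} (hp : 0 < p) (hr : 0 < r)
    (hplam : p ≤ r * lam) :
    ∫ s in (0 : ℝ)..lam, max (s * r - p) 0 / s =
      r * lam - p - p * (Real.log (r * lam) - Real.log p) := by
  have hpr : 0 < p / r := by positivity
  have hprlam : p / r ≤ lam := (div_le_iff₀' hr).mpr hplam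
  have hlam : 0 < lam := hpr.trans_le hprlam
  have hleft : Set.EqOn (fun s => max (s * r - p) 0 / s) 0 (Set.Ioo 0 (p / r)) := by
    intro s hs
    simp [((lt_div_iff₀ hr).mp hs.2).le]
  have hright : Set.EqOn (fun s => max (s * r - p) 0 / s) (fun s => r - p * s⁻¹)
      (Set.Ioo (p / r) lam) := by
    intro s hs
    have hs0 : 0 < s := hpr.trans hs.1
    have hsr : p ≤ s * r := ((div_lt_iff₀ hr).mp hs.1).le
    simp only [max_eq_left (sub_nonneg.mpr hsr)]
    field_simp
  have hint {b : ℝ} (hb : 0 ≤ b) := intervalIntegrable_max_mul_sub_div hp.le hr.le hb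
  have hinv : IntervalIntegrable (fun s : ℝ => p * s⁻¹) volume (p / r) lam :=
    (intervalIntegrable_inv_iff.mpr <| .inr <| by
      rw [Set.uIcc_of_le hprlam]
      exact fun h => hpr.not_ge h.1).const_mul p
  calc ∫ s in (0 : ℝ)..lam, max (s * r - p) 0 / s
      = ∫ s in (p / r)..lam, (r - p * s⁻¹) := by
        rw [← integral_add_adjacent_intervals (hint hpr.le)
            ((hint hpr.le).symm.trans (hint hlam.le)),
          integral_congr_Ioo_of_le hpr.le hleft, integral_congr_Ioo_of_le hprlam hright]
        simp
    _ = (lam - p / r) * r - p * Real.log (lam / (p / r)) := by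
        rw [intervalIntegral.integral_sub (by simp) hinv, intervalIntegral.integral_const,
          intervalIntegral.integral_const_mul, integral_inv_of_pos hpr hlam, smul_eq_mul]
    _ = r * lam - p - p * (Real.log (r * lam) - Real.log p) := by
        rw [div_div_eq_mul_div, mul_comm lam r, Real.log_div (by positivity) hp.ne']
        field_simp

theorem integral_max_mul_sub_div {p r lam : ℝ} (hp : 0 ≤ p) (hr : 0 < r) (hlam : 0 ≤ lam)
    (hplam : p ≤ r * lam) :
    ∫ s in (0 : ℝ)..lam, max (s * r - p) 0 / s =
      r * lam - p - p * (Real.log (r * lam) - Real.log p) := by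
  rcases hp.eq_or_lt with rfl | hp
  · have hconst : Set.EqOn (fun s => max (s * r - 0) 0 / s) (fun _ => r) (Set.Ioo 0 lam) := by
      intro s hs
      have hs0 : 0 < s := hs.1
      have hsr : 0 ≤ s * r := by positivity
      simp [hsr, hs0.ne']
    rw [integral_congr_Ioo_of_le hlam hconst]
    simp [mul_comm]
  · exact integral_max_mul_sub_div_of_pos hp hr hplam

end Scalar

section Pencil

open Filter MeasureTheory Topology
open scoped NNReal

variable {n : Type*} {ρ σ : Matrix n n ℂ}

theorem isHermitian_smul_sub (hρ : ρ.IsHermitian) (hσ : σ.IsHermitian) (s : ℝ) :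
    (s • σ - ρ).IsHermitian :=
  (hσ.smul (.all s)).sub hρ

variable [DecidableEq n]

theorem posSemidef_add_smul_one (hσ : σ.PosSemidef) {x : ℝ} (hx : 0 ≤ x) :
    (σ + x • 1).PosSemidef :=
  hσ.add (PosSemidef.one.smul hx)

theorem smul_add_smul_one_sub (ρ σ : Matrix n n ℂ) (s x : ℝ) :
    s • (σ + x • 1) - ρ = (s • σ - ρ) + (s * x) • 1 := by
  module

variable [Fintype n]

/-- The integral `∫₀^λ tr⁺[sσ - ρ] ds / s` along the matrix pencil `sσ - ρ`. -/
noncomputable def pencilIntegral (ρ σ : Matrix n n ℂ) (lam : ℝ) : ℝ :=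
  ∫ s in (0 : ℝ)..lam, trPos (s • σ - ρ) / s

theorem monotone_trPos_smul_sub (hρ : ρ.IsHermitian) (hσ : σ.PosSemidef) :
    Monotone fun s : ℝ => trPos (s • σ - ρ) := by
  intro s t hst
  refine trPos_mono (isHermitian_smul_sub hρ hσ.1 s) (isHermitian_smul_sub hρ hσ.1 t) ?_
  have h : (t • σ - ρ) - (s • σ - ρ) = (t - s) • σ := by module
  exact h ▸ hσ.smul (sub_nonneg.mpr hst)

theorem trPos_smul_sub_le (hρ : ρ.PosSemidef) (hσ : σ.PosSemidef) {s : ℝ} (hs : 0 ≤ s) :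
    trPos (s • σ - ρ) ≤ s * σ.trace.re := calc
  trPos (s • σ - ρ) ≤ trPos (s • σ) :=
    trPos_mono (isHermitian_smul_sub hρ.1 hσ.1 s) (hσ.smul hs).1 (by simpa using hρ)
  _ = s * σ.trace.re := by simp [trPos_eq_re_trace (hσ.smul hs)]

theorem intervalIntegrable_trPos_smul_sub_div (hρ : ρ.PosSemidef) (hσ : σ.PosSemidef) {lam : ℝ}
    (hlam : 0 ≤ lam) : IntervalIntegrable (fun s => trPos (s • σ - ρ) / s) volume 0 lam :=
  intervalIntegrable_div_self (monotone_trPos_smul_sub hρ.1 hσ).measurable hlam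
    (fun s _ => trPos_nonneg (isHermitian_smul_sub hρ.1 hσ.1 s))
    fun _ hs => trPos_smul_sub_le hρ hσ hs.le

theorem lipschitzWith_trPos_smul_sub_div (hρ : ρ.IsHermitian) (hσ : σ.IsHermitian) {s : ℝ}
    (hs : 0 < s) :
    LipschitzWith (Fintype.card n) fun x : ℝ => trPos (s • (σ + x • 1) - ρ) / s := by
  refine LipschitzWith.of_dist_le_mul fun x y => ?_
  have h := abs_trPos_add_smul_one_sub_le (isHermitian_smul_sub hρ hσ s) (s * x) (s * y)
  rw [← mul_sub, abs_mul, abs_of_pos hs] at h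
  rw [Real.dist_eq, Real.dist_eq, ← sub_div, abs_div, abs_of_pos hs, div_le_iff₀ hs,
    smul_add_smul_one_sub, smul_add_smul_one_sub, NNReal.coe_natCast]
  linarith

theorem continuousOn_pencilIntegral (hρ : ρ.PosSemidef) (hσ : σ.PosSemidef) {lam : ℝ}
    (hlam : 0 ≤ lam) :
    ContinuousOn (fun x : ℝ => pencilIntegral ρ (σ + x • 1) lam) (Set.Ici 0) := by
  lift lam to ℝ≥0 using hlam
  have hint {x : ℝ} (hx : 0 ≤ x) := intervalIntegrable_trPos_smul_sub_div hρ
    (posSemidef_add_smul_one hσ hx) lam.coe_nonneg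
  refine (LipschitzOnWith.of_dist_le_mul (K := Fintype.card n * lam)
    fun x hx y hy => ?_).continuousOn
  rw [pencilIntegral, pencilIntegral, dist_eq_norm,
    ← intervalIntegral.integral_sub (hint hx) (hint hy)]
  have hbound := intervalIntegral.norm_integral_le_of_norm_le_const (a := 0) (b := lam)
    (f := fun s => trPos (s • (σ + x • 1) - ρ) / s - trPos (s • (σ + y • 1) - ρ) / s)
    (C := Fintype.card n * dist x y) fun s hs => by
      rw [Set.uIoc_of_le lam.coe_nonneg] at hs
      simpa [dist_eq_norm] using (lipschitzWith_trPos_smul_sub_div hρ.1 hσ.1 hs.1).dist_le_mul x y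
  refine hbound.trans_eq ?_
  rw [sub_zero, NNReal.abs_eq, NNReal.coe_mul, NNReal.coe_natCast]
  ring

theorem hasDerivAt_trPos_smul_sub_div (hρ : ρ.IsHermitian) (hσ : σ.IsHermitian) {s r : ℝ}
    (hs : 0 < s) {C : Matrix n n ℂ} (hC : IsUnit C) {t : n → ℝ} (hσC : σ + r • 1 = C * Cᴴ)
    (hρC : ρ = C * diagonal (fun i => (t i : ℂ)) * Cᴴ) (hst : ∀ i, t i ≠ s) :
    HasDerivAt (fun x : ℝ => trPos (s • (σ + x • 1) - ρ) / s) ({i | t i < s}.ncard : ℝ) r := by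
  have hdiag : (s • σ - ρ) + (s * r) • 1 =
      C * diagonal (fun i => ((s - t i : ℝ) : ℂ)) * Cᴴ := by
    rw [← smul_add_smul_one_sub, hσC, hρC]
    exact smul_mul_conjTranspose_sub C t s
  have hderiv := hasDerivAt_trPos_add_smul_one (isHermitian_smul_sub hρ hσ s) hC
    (fun i => sub_ne_zero.mpr (hst i).symm) hdiag
  have hcomp := (hderiv.comp r ((hasDerivAt_id r).const_mul s)).div_const s
  simp only [sub_pos, mul_one, mul_div_cancel_right₀ _ hs.ne'] at hcomp
  simpa only [smul_add_smul_one_sub] using! hcomp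

theorem hasDerivAt_pencilIntegral_of_congruence (hρ : ρ.PosSemidef) (hσ : σ.PosSemidef)
    {lam r : ℝ} (hlam : 0 ≤ lam) (hr : 0 < r) {C : Matrix n n ℂ} (hC : IsUnit C) {t : n → ℝ}
    (hσC : σ + r • 1 = C * Cᴴ) (hρC : ρ = C * diagonal (fun i => (t i : ℂ)) * Cᴴ) :
    HasDerivAt (fun x : ℝ => pencilIntegral ρ (σ + x • 1) lam)
      (∫ s in (0 : ℝ)..lam, ({i | t i < s}.ncard : ℝ)) r := by
  have hint {x : ℝ} (hx : 0 < x) := intervalIntegrable_trPos_smul_sub_div hρ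
    (posSemidef_add_smul_one hσ hx.le) hlam
  refine (intervalIntegral.hasDerivAt_integral_of_dominated_loc_of_lip
    (bound := fun _ => (Fintype.card n : ℝ)) (Ioi_mem_nhds hr) ?_ (hint hr) ?_ ?_
    (by simp) ?_).2
  · filter_upwards [Ioi_mem_nhds hr] with x hx
    exact (intervalIntegrable_iff.mp (hint hx)).aestronglyMeasurable
  · refine Measurable.aestronglyMeasurable (Monotone.measurable fun a b hab => ?_)
    exact_mod_cast Set.ncard_le_ncard fun i (hi : t i < a) => hi.trans_le hab
  · refine .of_forall fun s hs => ?_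
    rw [Set.uIoc_of_le hlam] at hs
    simpa using (lipschitzWith_trPos_smul_sub_div hρ.1 hσ.1 hs.1).lipschitzOnWith
  · filter_upwards [(Set.finite_range t).countable.ae_notMem volume] with s hst hs
    rw [Set.uIoc_of_le hlam] at hs
    exact hasDerivAt_trPos_smul_sub_div hρ.1 hσ.1 hs.1 hC hσC hρC fun i hi => hst ⟨i, hi⟩

theorem hasDerivAt_pencilIntegral (hρ : ρ.PosSemidef) (hσ : σ.PosSemidef) {lam r : ℝ}
    (hlam : 0 ≤ lam) (hr : 0 < r) (hle : (lam • σ - ρ).PosSemidef) :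
    HasDerivAt (fun x : ℝ => pencilIntegral ρ (σ + x • 1) lam)
      (Fintype.card n * lam - ((σ + r • 1)⁻¹ * ρ).trace.re) r := by
  have hpos : (σ + r • 1).PosDef := PosDef.posSemidef_add hσ (PosDef.one.smul hr)
  obtain ⟨C, t, hC, hσC, hρC⟩ := exists_simultaneous_congruence hpos hρ.1
  have ht (i : n) : 0 ≤ t i := by
    have h := hC.posSemidef_star_right_conjugate_iff.mp (hρC ▸ hρ)
    exact Complex.zero_le_real.mp (posSemidef_diagonal_iff.mp h i)
  have htlam (i : n) : t i ≤ lam := by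
    have h : (C * diagonal (fun i => ((lam - t i : ℝ) : ℂ)) * Cᴴ).PosSemidef := by
      have hpencil : (lam • (σ + r • 1) - ρ).PosSemidef := by
        rw [smul_add_smul_one_sub]
        exact posSemidef_add_smul_one hle (by positivity)
      rw [hσC, hρC] at hpencil
      exact smul_mul_conjTranspose_sub C t lam ▸ hpencil
    have h' := posSemidef_diagonal_iff.mp (hC.posSemidef_star_right_conjugate_iff.mp h) i
    exact sub_nonneg.mp (Complex.zero_le_real.mp h')
  have htrace : ((σ + r • 1)⁻¹ * ρ).trace.re = ∑ i, t i := by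
    rw [hσC, hρC, trace_inv_mul_congruence hC]
    simp [trace_diagonal]
  rw [htrace, ← integral_ncard_lt ht htlam]
  exact hasDerivAt_pencilIntegral_of_congruence hρ hσ hlam hr hC hσC hρC

theorem pencilIntegral_smul_one (hρ : ρ.PosSemidef) {lam r : ℝ} (hlam : 0 ≤ lam) (hr : 0 < r)
    (hle : ((r * lam) • 1 - ρ).PosSemidef) :
    pencilIntegral ρ (r • 1) lam = Fintype.card n * (r * lam)
      - ρ.trace.re * (1 + Real.log (r * lam)) + (ρ * matLog ρ).trace.re := by
  set U := hρ.1.eigenvectorUnitary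
  set p := hρ.1.eigenvalues
  have hρU : conjDiag U p = ρ := conjDiag_eigenvalues hρ.1
  have hp (i : n) : p i ≤ r * lam := posSemidef_smul_one_sub_conjDiag_iff U |>.mp (hρU.symm ▸ hle) i
  have hint (s : ℝ) : trPos (s • (r • 1) - ρ) / s = ∑ i, max (s * r - p i) 0 / s := by
    rw [smul_smul, ← hρU, smul_one_sub_conjDiag, trPos_conjDiag, Finset.sum_div]
  have hentropy : (ρ * matLog ρ).trace.re = ∑ i, p i * Real.log (p i) := by
    rw [← conjDiag_log_eigenvalues hρ.1, re_trace_mul_conjDiag]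
    simp only [diagIn_eigenvectorUnitary, p]
  have htrace : ρ.trace.re = ∑ i, p i := by
    simp [← sum_diagIn U, diagIn_eigenvectorUnitary, U, p]
  simp_rw [pencilIntegral, hint]
  rw [intervalIntegral.integral_finsetSum fun i _ =>
    intervalIntegrable_max_mul_sub_div (hρ.eigenvalues_nonneg i) hr.le hlam]
  simp_rw [integral_max_mul_sub_div (hρ.eigenvalues_nonneg _) hr hlam (hp _)]
  rw [hentropy, htrace]
  simp [Finset.sum_sub_distrib, mul_sub, Finset.sum_mul, mul_add]
  ring

theorem trPos_smul_sub_le_trPos_add (hρ : ρ.IsHermitian) (hσ : σ.PosSemidef) {τ : Matrix n n ℂ}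
    (hτ : τ.PosSemidef) {s : ℝ} (hs : 0 ≤ s) :
    trPos (s • τ - ρ) ≤ trPos (s • (σ + τ) - ρ) ∧
      trPos (s • (σ + τ) - ρ) ≤ trPos (s • τ - ρ) + s * σ.trace.re := by
  have hτρ := isHermitian_smul_sub hρ hτ.1 s
  have hσs := hσ.smul hs
  have hsplit : s • (σ + τ) - ρ = (s • τ - ρ) + s • σ := by module
  refine ⟨trPos_mono hτρ (isHermitian_smul_sub hρ (hσ.add hτ).1 s) ?_, ?_⟩
  · simpa [hsplit] using hσs
  · rw [hsplit]
    simpa [trPos_eq_re_trace hσs] using trPos_add_le hτρ hσs.1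

theorem norm_trPos_add_sub_div_le (hρ : ρ.IsHermitian) (hσ : σ.PosSemidef) {τ : Matrix n n ℂ}
    (hτ : τ.PosSemidef) {s : ℝ} (hs : 0 < s) :
    ‖trPos (s • (σ + τ) - ρ) / s - trPos (s • τ - ρ) / s‖ ≤ σ.trace.re := by
  obtain ⟨hge, hle⟩ := trPos_smul_sub_le_trPos_add hρ hσ hτ hs.le
  rw [← sub_div, Real.norm_of_nonneg (div_nonneg (sub_nonneg.mpr hge) hs.le), div_le_iff₀' hs]
  exact sub_le_iff_le_add'.mpr hle

theorem eventually_trPos_add_smul_one_sub_div (hρ : ρ.IsHermitian) (hσ : σ.PosSemidef) {s : ℝ}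
    (hs : 0 < s) :
    ∀ᶠ r : ℝ in atTop,
      trPos (s • (σ + r • 1) - ρ) / s - trPos (s • (r • 1) - ρ) / s = σ.trace.re := by
  filter_upwards [(tendsto_id.const_mul_atTop hs).eventually
    (eventually_posSemidef_smul_one_sub hρ)] with r hr
  rw [id_eq] at hr
  have hsplit : s • (σ + r • 1) - ρ = s • σ + ((s * r) • 1 - ρ) := by module
  rw [smul_smul, hsplit, trPos_eq_re_trace ((hσ.smul hs.le).add hr), trPos_eq_re_trace hr,
    ← sub_div, trace_add, Complex.add_re, add_sub_cancel_right]
  simp [hs.ne']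

theorem tendsto_pencilIntegral_add_smul_one_sub (hρ : ρ.PosSemidef) (hσ : σ.PosSemidef) {lam : ℝ}
    (hlam : 0 ≤ lam) :
    Tendsto (fun r : ℝ => pencilIntegral ρ (σ + r • 1) lam - pencilIntegral ρ (r • 1) lam) atTop
      (𝓝 (lam * σ.trace.re)) := by
  have hone {r : ℝ} (hr : 0 ≤ r) : (r • (1 : Matrix n n ℂ)).PosSemidef := PosSemidef.one.smul hr
  have hint {r : ℝ} (hr : 0 ≤ r) :=
    (intervalIntegrable_trPos_smul_sub_div hρ (posSemidef_add_smul_one hσ hr) hlam).sub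
      (intervalIntegrable_trPos_smul_sub_div hρ (hone hr) hlam)
  have hlim : Tendsto (fun r : ℝ => ∫ s in (0 : ℝ)..lam,
      (trPos (s • (σ + r • 1) - ρ) / s - trPos (s • (r • 1) - ρ) / s)) atTop
      (𝓝 (∫ _ in (0 : ℝ)..lam, σ.trace.re)) := by
    refine intervalIntegral.tendsto_integral_filter_of_dominated_convergence
      (fun _ => σ.trace.re) ?_ ?_ (by simp) ?_
    · filter_upwards [eventually_ge_atTop 0] with r hr
      exact (intervalIntegrable_iff.mp (hint hr)).aestronglyMeasurable
    · filter_upwards [eventually_ge_atTop 0] with r hr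
      refine .of_forall fun s hs => ?_
      rw [Set.uIoc_of_le hlam] at hs
      exact norm_trPos_add_sub_div_le hρ.1 hσ (hone hr) hs.1
    · refine .of_forall fun s hs => ?_
      rw [Set.uIoc_of_le hlam] at hs
      exact tendsto_nhds_of_eventually_eq (eventually_trPos_add_smul_one_sub_div hρ.1 hσ hs.1)
  rw [intervalIntegral.integral_const, smul_eq_mul, sub_zero] at hlim
  refine hlim.congr' ?_
  filter_upwards [eventually_ge_atTop 0] with r hr
  exact intervalIntegral.integral_sub
    (intervalIntegrable_trPos_smul_sub_div hρ (posSemidef_add_smul_one hσ hr) hlam)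
    (intervalIntegrable_trPos_smul_sub_div hρ (hone hr) hlam)

end Pencil

section LogSums

open Filter Topology

variable {ι : Type*} [Fintype ι] {d q : ι → ℝ}

theorem hasDerivAt_sum_mul_log_add {r : ℝ} (hq : ∀ i, q i + r ≠ 0) :
    HasDerivAt (fun x => ∑ i, d i * Real.log (q i + x)) (∑ i, d i * (q i + r)⁻¹) r :=
  HasDerivAt.fun_sum fun i _ => by
    simpa using (((hasDerivAt_id r).const_add (q i)).log (hq i)).const_mul (d i)

theorem continuousOn_sum_mul_log_add (hq : ∀ i, 0 ≤ q i) (hdq : ∀ i, q i = 0 → d i = 0) :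
    ContinuousOn (fun x => ∑ i, d i * Real.log (q i + x)) (Set.Ici 0) := by
  refine continuousOn_finsetSum _ fun i _ => ?_
  rcases (hq i).eq_or_lt with hi | hi
  · simpa [hdq i hi.symm] using continuousOn_const
  · refine continuousOn_const.mul (ContinuousOn.log (by fun_prop) fun x (hx : 0 ≤ x) => ?_)
    positivity

theorem tendsto_sum_mul_log_add_sub (d q : ι → ℝ) :
    Tendsto (fun x => ∑ i, d i * Real.log (q i + x) - (∑ i, d i) * Real.log x) atTop (𝓝 0) := by
  have hterm (i : ι) :
      Tendsto (fun x => d i * (Real.log (x + q i) - Real.log x)) atTop (𝓝 0) := by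
    simpa using (Real.tendsto_log_comp_add_sub_log (q i)).const_mul (d i)
  simpa [mul_sub, Finset.sum_sub_distrib, Finset.sum_mul, add_comm] using
    tendsto_finsetSum Finset.univ fun i _ => hterm i

end LogSums

section Resolvent

open Filter Topology

variable {n : Type*} [Fintype n] [DecidableEq n] {σ : Matrix n n ℂ}

/-- The quantity `tr[ρ ln(σ + x)]`, computed in an eigenbasis of `σ` so that it is manifestly a
combination of the functions `x ↦ ln(q + x)` with `q` an eigenvalue of `σ`. -/
noncomputable def traceMulLogAdd (ρ : Matrix n n ℂ) (hσ : σ.IsHermitian) (x : ℝ) : ℝ :=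
  ∑ i, diagIn hσ.eigenvectorUnitary ρ i * Real.log (hσ.eigenvalues i + x)

theorem traceMulLogAdd_zero (ρ : Matrix n n ℂ) (hσ : σ.IsHermitian) :
    traceMulLogAdd ρ hσ 0 = (ρ * matLog σ).trace.re := by
  simp [← conjDiag_log_eigenvalues hσ, re_trace_mul_conjDiag, traceMulLogAdd]

theorem hasDerivAt_traceMulLogAdd (ρ : Matrix n n ℂ) (hσ : σ.PosSemidef) {r : ℝ} (hr : 0 < r) :
    HasDerivAt (traceMulLogAdd ρ hσ.1) ((σ + r • 1)⁻¹ * ρ).trace.re r := by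
  have hq (i : n) : hσ.1.eigenvalues i + r ≠ 0 :=
    (add_pos_of_nonneg_of_pos (hσ.eigenvalues_nonneg i) hr).ne'
  have hinv : (σ + r • 1)⁻¹ = conjDiag hσ.1.eigenvectorUnitary fun i =>
      (hσ.1.eigenvalues i + r)⁻¹ := by
    rw [← inv_conjDiag _ hq, ← conjDiag_add_smul_one, conjDiag_eigenvalues]
  rw [hinv, trace_mul_comm, re_trace_mul_conjDiag]
  exact hasDerivAt_sum_mul_log_add hq

theorem diagIn_eigenvectorUnitary_eq_zero {ρ : Matrix n n ℂ} (hρ : ρ.PosSemidef)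
    (hσ : σ.IsHermitian) {lam : ℝ} (hle : (lam • σ - ρ).PosSemidef) {i : n}
    (hi : hσ.eigenvalues i = 0) : diagIn hσ.eigenvectorUnitary ρ i = 0 := by
  have h := diagIn_nonneg hσ.eigenvectorUnitary hle i
  rw [diagIn_sub, diagIn_smul, diagIn_eigenvectorUnitary, hi, mul_zero, zero_sub, neg_nonneg] at h
  exact h.antisymm (diagIn_nonneg _ hρ i)

theorem continuousOn_traceMulLogAdd {ρ : Matrix n n ℂ} (hρ : ρ.PosSemidef) (hσ : σ.PosSemidef)
    {lam : ℝ} (hle : (lam • σ - ρ).PosSemidef) :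
    ContinuousOn (traceMulLogAdd ρ hσ.1) (Set.Ici 0) :=
  continuousOn_sum_mul_log_add hσ.eigenvalues_nonneg fun _ =>
    diagIn_eigenvectorUnitary_eq_zero hρ hσ.1 hle

theorem tendsto_traceMulLogAdd_sub (ρ : Matrix n n ℂ) (hσ : σ.IsHermitian) :
    Tendsto (fun r => traceMulLogAdd ρ hσ r - ρ.trace.re * Real.log r) atTop (𝓝 0) := by
  simpa only [traceMulLogAdd, sum_diagIn] using
    tendsto_sum_mul_log_add_sub (diagIn hσ.eigenvectorUnitary ρ) hσ.eigenvalues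

end Resolvent

section RelativeEntropy

open Filter MeasureTheory Topology

theorem eq_of_hasDerivAt_zero_of_tendsto_atTop {f : ℝ → ℝ} {a l : ℝ}
    (hcont : ContinuousWithinAt f (Set.Ici a) a) (hderiv : ∀ x ∈ Set.Ioi a, HasDerivAt f 0 x)
    (hlim : Tendsto f atTop (𝓝 l)) : f a = l := by
  have h := integral_Ioi_of_hasDerivAt_of_tendsto hcont hderiv integrableOn_zero hlim
  rw [integral_zero] at h
  linarith

variable {n : Type*} [Fintype n] [DecidableEq n] {ρ σ : Matrix n n ℂ}

theorem tendsto_pencilIntegral_add_traceMulLogAdd (hρ : ρ.PosSemidef) (hσ : σ.PosSemidef)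
    {lam : ℝ} (hlam : 0 < lam) :
    Tendsto (fun r : ℝ => pencilIntegral ρ (σ + r • 1) lam + traceMulLogAdd ρ hσ.1 r
        - Fintype.card n * (r * lam)) atTop
      (𝓝 ((ρ * matLog ρ).trace.re - ρ.trace.re * (1 + Real.log lam) + lam * σ.trace.re)) := by
  have hlim := (((tendsto_pencilIntegral_add_smul_one_sub hρ hσ hlam.le).add
    (tendsto_traceMulLogAdd_sub ρ hσ.1)).const_add
      ((ρ * matLog ρ).trace.re - ρ.trace.re * (1 + Real.log lam)))
  rw [add_zero] at hlim
  refine hlim.congr' ?_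
  filter_upwards [eventually_gt_atTop 0, (tendsto_id.atTop_mul_const hlam).eventually
    (eventually_posSemidef_smul_one_sub hρ.1)] with r hr hle
  rw [pencilIntegral_smul_one hρ hlam.le hr hle, Real.log_mul hr.ne' hlam.ne']
  ring

theorem pencilIntegral_add_trace_mul_matLog (hρ : ρ.PosSemidef) (hσ : σ.PosSemidef) {lam : ℝ}
    (hlam : 0 < lam) (hle : (lam • σ - ρ).PosSemidef) :
    pencilIntegral ρ σ lam + (ρ * matLog σ).trace.re =
      (ρ * matLog ρ).trace.re - ρ.trace.re * (1 + Real.log lam) + lam * σ.trace.re := by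
  have hcont : ContinuousOn (fun r : ℝ => pencilIntegral ρ (σ + r • 1) lam +
      traceMulLogAdd ρ hσ.1 r - Fintype.card n * (r * lam)) (Set.Ici 0) :=
    ((continuousOn_pencilIntegral hρ hσ hlam.le).add
      (continuousOn_traceMulLogAdd hρ hσ hle)).sub (by fun_prop)
  have hderiv (r : ℝ) (hr : 0 < r) : HasDerivAt (fun r : ℝ => pencilIntegral ρ (σ + r • 1) lam +
      traceMulLogAdd ρ hσ.1 r - Fintype.card n * (r * lam)) 0 r := by
    simpa using! ((hasDerivAt_pencilIntegral hρ hσ hlam.le hr hle).add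
      (hasDerivAt_traceMulLogAdd ρ hσ hr)).sub
        (((hasDerivAt_id r).mul_const lam).const_mul (Fintype.card n : ℝ))
  have h := eq_of_hasDerivAt_zero_of_tendsto_atTop (hcont 0 Set.self_mem_Ici) hderiv
    (tendsto_pencilIntegral_add_traceMulLogAdd hρ hσ hlam)
  simpa [traceMulLogAdd_zero] using h

theorem pencilIntegral_eq_integral (hρ : ρ.PosSemidef) (hσ : σ.PosSemidef) {μ lam : ℝ}
    (hμ : 0 ≤ μ) (hle : μ ≤ lam) (hlower : (ρ - μ • σ).PosSemidef) :
    pencilIntegral ρ σ lam = ∫ s in μ..lam, trPos (s • σ - ρ) / s := by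
  have hint {b : ℝ} (hb : 0 ≤ b) := intervalIntegrable_trPos_smul_sub_div hρ hσ hb
  have hzero : Set.EqOn (fun s : ℝ => trPos (s • σ - ρ) / s) 0 (Set.Ioo 0 μ) := by
    intro s hs
    have hneg : -(s • σ - ρ) = (ρ - μ • σ) + (μ - s) • σ := by module
    have hpsd := hlower.add (hσ.smul (sub_nonneg.mpr hs.2.le))
    simp [trPos_eq_zero (hneg ▸ hpsd)]
  rw [pencilIntegral, ← intervalIntegral.integral_add_adjacent_intervals (hint hμ)
    ((hint hμ).symm.trans (hint (hμ.trans hle))),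
    intervalIntegral.integral_congr_Ioo_of_le hμ hzero]
  simp

end RelativeEntropy

theorem relEnt_eq_integral_repr_general {n : Type*} [Fintype n] [DecidableEq n]
    {ρ σ : Matrix n n ℂ} (hρ : ρ.PosSemidef) (hσ : σ.PosSemidef) {μ lam : ℝ} (hμ : 0 ≤ μ)
    (hle : μ ≤ lam) (hlam : 0 < lam) (hlower : (ρ - μ • σ).PosSemidef)
    (hupper : (lam • σ - ρ).PosSemidef) :
    (Matrix.trace (ρ * (matLog ρ - matLog σ))).re =
      (∫ s in μ..lam, trPos (s • σ - ρ) / s) + ρ.trace.re * (Real.log lam + 1)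
        - lam * σ.trace.re := by
  have h := pencilIntegral_add_trace_mul_matLog hρ hσ hlam hupper
  rw [pencilIntegral_eq_integral hρ hσ hμ hle hlower] at h
  rw [mul_sub, trace_sub, Complex.sub_re]
  linarith

/-- for states ρ, σ with μσ ≤ ρ ≤ λσ (0 < μ ≤ λ), the relative entropy
`D(ρ‖σ) = tr[ρ(ln ρ − ln σ)]` equals `∫_μ^λ (1/s) tr⁺[σs − ρ] ds + ln λ + 1 − λ`. -/
theorem relEnt_eq_integral_repr {n : Type*} [Fintype n] [DecidableEq n]
    (ρ σ : Matrix n n ℂ) (hρ : ρ.PosSemidef) (hσ : σ.PosSemidef)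
    (hρ1 : Matrix.trace ρ = 1) (hσ1 : Matrix.trace σ = 1)
    (μ lam : ℝ) (hμ : 0 < μ) (hle : μ ≤ lam)
    (hlower : (ρ - μ • σ).PosSemidef) (hupper : (lam • σ - ρ).PosSemidef) :
    (Matrix.trace (ρ * (matLog ρ - matLog σ))).re =
      (∫ s in μ..lam, trPos (s • σ - ρ) / s) + Real.log lam + 1 - lam := by
  have h := relEnt_eq_integral_repr_general hρ hσ hμ.le hle (hμ.trans_le hle) hlower hupper
  simpa [hρ1, hσ1, ← add_assoc] using h
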